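/- Discrete Itô–Tanaka–Meyer formula (Lemma 3.2). Let a ∈ ℝ^d, h > 0, and let f = (f¹,…,f^d) : G(a,h) → ℝ^d be a (time-independent) discrete conservative vector field. Let X_r = (X_r¹,…,X_r^d) (r ≥ 1) with each X_r^j ∈ {−1,1}, set S_0 = a, S_n = a + h(X_1 + ⋯ + X_n), t_n = n h². Then for every n ≥ 1: T_{S_0}^{S_n}(f, γ'₀) h = Σ_{r=1}^{n} Σ_{j=1}^{d} f^j(S_{r−1} + Σ_{i=1}^{j−1} h X_r^i e_i) · h X_r^j + ½ Σ_{x ∈ G(a,h)} Σ_{μ ∈ {−1,1}^d} ℓ_h^μ(t_n, x) · Σ_{j=1}^{d} μ^j [ f^j(x + Σ_{i=1}^{j} h μ^i e_i) − f^j(x + Σ_{i=1}^{j−1} h μ^i e_i) ], where the sum over x has only finitely many nonzero terms. -/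

import Mathlib

/- Shared discrete-path infrastructure. -/

namespace DiscretePaths

/-- The sign `±1` associated to a boolean orientation. -/
noncomputable def sgn (b : Bool) : ℝ := if b then 1 else -1

/-- The vector `μ h e_j` of an oriented grid edge, where the edge is encoded as
`e = (j, b)` with `μ = sgn b`. -/
noncomputable def stepVec (d : ℕ) (h : ℝ) (e : Fin d × Bool) : Fin d → ℝ :=
  fun i => if i = e.1 then sgn e.2 * h else 0

/-- The endpoint of a discrete path starting at `b`, given by its list of oriented edges. -/
noncomputable def pathEnd (d : ℕ) (h : ℝ) (b : Fin d → ℝ) :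
    List (Fin d × Bool) → (Fin d → ℝ)
  | [] => b
  | e :: γ => pathEnd d h (fun i => b i + stepVec d h e i) γ

/-- The trapezoidal sum `T_γ(f, γ'₀) h` of the vector field `f` over the discrete path
starting at `b` with oriented edges `γ`. -/
noncomputable def trapSum (d : ℕ) (h : ℝ) (f : (Fin d → ℝ) → Fin d → ℝ)
    (b : Fin d → ℝ) : List (Fin d × Bool) → ℝ
  | [] => 0
  | e :: γ => h / 2 * sgn e.2 * (f b e.1 + f (fun i => b i + stepVec d h e i) e.1)
      + trapSum d h f (fun i => b i + stepVec d h e i) γ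

/-- Membership in the grid `G(a,h) = a + hℤ^d`. -/
def InGrid (d : ℕ) (a : Fin d → ℝ) (h : ℝ) (x : Fin d → ℝ) : Prop :=
  ∃ k : Fin d → ℤ, ∀ i, x i = a i + h * k i

/-- A vector field on the grid `G(a,h)` is discrete conservative if its trapezoidal sum
over every closed discrete path vanishes. -/
def DiscreteConservative (d : ℕ) (a : Fin d → ℝ) (h : ℝ)
    (f : (Fin d → ℝ) → Fin d → ℝ) : Prop :=
  ∀ b, InGrid d a h b → ∀ γ : List (Fin d × Bool), pathEnd d h b γ = b →
    trapSum d h f b γ = 0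

end DiscretePaths

open DiscretePaths

/-!
Conservativity makes the trapezoidal sum path independent, so it may be evaluated along the path
that realises each step `x ↦ x + hμ` of the walk by moving one coordinate at a time.  On each edge
the trapezoidal rule is the left-point rule plus half the increment of `f`: the left-point parts add
up to the Itô sum, and the increments depend only on `(x, μ)`, so grouping the times at which the
walk makes the step `μ` from `x` turns their sum into an integral against local time.
-/

namespace DiscretePaths

variable {d : ℕ} {a : Fin d → ℝ} {h : ℝ}

theorem sgn_not (b : Bool) : sgn (!b) = -sgn b := by
  cases b <;> simp [sgn]

theorem sgn_injective : Function.Injective sgn := by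
  intro b c
  cases b <;> cases c <;> norm_num [sgn]

theorem exists_eq_sgn {x : ℝ} (hx : x = 1 ∨ x = -1) : ∃ b, x = sgn b := by
  rcases hx with rfl | rfl
  · exact ⟨true, by simp [sgn]⟩
  · exact ⟨false, by simp [sgn]⟩

section Concatenation

theorem pathEnd_append (b : Fin d → ℝ) (γ δ : List (Fin d × Bool)) :
    pathEnd d h b (γ ++ δ) = pathEnd d h (pathEnd d h b γ) δ := by
  induction γ generalizing b with
  | nil => rfl
  | cons _ _ ih => exact ih _

theorem trapSum_append (f : (Fin d → ℝ) → Fin d → ℝ) (b : Fin d → ℝ)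
    (γ δ : List (Fin d × Bool)) :
    trapSum d h f b (γ ++ δ) = trapSum d h f b γ + trapSum d h f (pathEnd d h b γ) δ := by
  induction γ generalizing b with
  | nil => simp [trapSum, pathEnd]
  | cons e γ ih => simp only [List.cons_append, trapSum, pathEnd, ih, add_assoc]

theorem pathEnd_flatten_ofFn {m : ℕ} (c : Fin m → List (Fin d × Bool)) (p : ℕ → Fin d → ℝ)
    (hp : ∀ j : Fin m, pathEnd d h (p j) (c j) = p (j + 1)) :
    pathEnd d h (p 0) (List.ofFn c).flatten = p m := by
  induction m generalizing p with
  | zero => simp [pathEnd]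
  | succ m ih =>
    have hhead : pathEnd d h (p 0) (c 0) = p 1 := hp 0
    rw [List.ofFn_succ, List.flatten_cons, pathEnd_append, hhead]
    exact ih (fun j => c j.succ) (fun j => p (j + 1)) fun j => hp j.succ

theorem trapSum_flatten_ofFn {m : ℕ} (f : (Fin d → ℝ) → Fin d → ℝ)
    (c : Fin m → List (Fin d × Bool)) (p : ℕ → Fin d → ℝ)
    (hp : ∀ j : Fin m, pathEnd d h (p j) (c j) = p (j + 1)) :
    trapSum d h f (p 0) (List.ofFn c).flatten = ∑ j : Fin m, trapSum d h f (p j) (c j) := by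
  induction m generalizing p with
  | zero => simp [trapSum]
  | succ m ih =>
    have hhead : pathEnd d h (p 0) (c 0) = p 1 := hp 0
    rw [List.ofFn_succ, List.flatten_cons, trapSum_append, hhead, Fin.sum_univ_succ]
    exact congrArg _ (ih (fun j => c j.succ) (fun j => p (j + 1)) fun j => hp j.succ)

end Concatenation

section PathIndependence

/-- The path `-γ`: the edges of `γ` traversed backwards, to be started at the endpoint of `γ`. -/
def revPath (γ : List (Fin d × Bool)) : List (Fin d × Bool) :=
  (γ.map fun e => (e.1, !e.2)).reverse

theorem revPath_cons (e : Fin d × Bool) (γ : List (Fin d × Bool)) :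
    revPath (e :: γ) = revPath γ ++ [(e.1, !e.2)] := by
  simp [revPath]

theorem stepVec_not (e : Fin d × Bool) (i : Fin d) :
    stepVec d h (e.1, !e.2) i = -stepVec d h e i := by
  simp only [stepVec, sgn_not]
  split_ifs <;> simp

theorem pathEnd_revPath (b : Fin d → ℝ) (γ : List (Fin d × Bool)) :
    pathEnd d h (pathEnd d h b γ) (revPath γ) = b := by
  induction γ generalizing b with
  | nil => rfl
  | cons e γ ih => simp [revPath_cons, pathEnd_append, pathEnd, ih, stepVec_not]

theorem trapSum_revPath (f : (Fin d → ℝ) → Fin d → ℝ) (b : Fin d → ℝ)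
    (γ : List (Fin d × Bool)) :
    trapSum d h f (pathEnd d h b γ) (revPath γ) = -trapSum d h f b γ := by
  induction γ generalizing b with
  | nil => simp [trapSum, revPath]
  | cons e γ ih =>
    simp only [revPath_cons, trapSum_append, pathEnd, trapSum, ih, pathEnd_revPath, stepVec_not,
      sgn_not, add_neg_cancel_right]
    ring

theorem DiscreteConservative.trapSum_eq_of_pathEnd_eq {f : (Fin d → ℝ) → Fin d → ℝ}
    (hf : DiscreteConservative d a h f) {b : Fin d → ℝ} (hb : InGrid d a h b)
    {γ δ : List (Fin d × Bool)} (hγδ : pathEnd d h b γ = pathEnd d h b δ) :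
    trapSum d h f b γ = trapSum d h f b δ := by
  have hclosed : pathEnd d h b (γ ++ revPath δ) = b := by
    rw [pathEnd_append, hγδ, pathEnd_revPath]
  have hzero := hf b hb _ hclosed
  rwa [trapSum_append, hγδ, trapSum_revPath, add_neg_eq_zero] at hzero

end PathIndependence

section DiagonalStep

/-- The point `x + ∑_{i < m} h μ^i e_i`, reached from `x` after moving the first `m` coordinates
(coordinates are numbered from `0`). -/
noncomputable def corner (h : ℝ) (x : Fin d → ℝ) (μ : Fin d → Bool) (m : ℕ) : Fin d → ℝ :=
  fun i => x i + if (i : ℕ) < m then h * sgn (μ i) else 0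

theorem corner_zero (x : Fin d → ℝ) (μ : Fin d → Bool) : corner h x μ 0 = x := by
  ext i
  simp [corner]

theorem corner_dim (x : Fin d → ℝ) (μ : Fin d → Bool) :
    corner h x μ d = fun i => x i + h * sgn (μ i) := by
  ext i
  simp [corner]

theorem corner_succ (x : Fin d → ℝ) (μ : Fin d → Bool) (j : Fin d) :
    corner h x μ (j + 1) = fun i => corner h x μ j i + stepVec d h (j, μ j) i := by
  ext i
  rcases lt_trichotomy i j with hij | rfl | hij
  · simp [corner, stepVec, hij, hij.ne, hij.le]
  · simp [corner, stepVec, mul_comm]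
  · simp [corner, stepVec, hij.ne', hij.not_gt, hij.not_ge]

/-- The path realising the diagonal step `x ↦ x + hμ` by moving the coordinates one at a time, in
increasing order. -/
def diagPath (μ : Fin d → Bool) : List (Fin d × Bool) :=
  (List.ofFn fun j => [(j, μ j)]).flatten

theorem pathEnd_singleton_corner (x : Fin d → ℝ) (μ : Fin d → Bool) (j : Fin d) :
    pathEnd d h (corner h x μ j) [(j, μ j)] = corner h x μ (j + 1) :=
  (corner_succ x μ j).symm

theorem pathEnd_diagPath (x : Fin d → ℝ) (μ : Fin d → Bool) :
    pathEnd d h x (diagPath μ) = fun i => x i + h * sgn (μ i) := by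
  simpa only [corner_zero, corner_dim, diagPath] using
    pathEnd_flatten_ofFn _ (corner h x μ) (pathEnd_singleton_corner x μ)

/-- The sum `∑_j μ^j (f^j(x + ∑_{i ≤ j} h μ^i e_i) - f^j(x + ∑_{i < j} h μ^i e_i))` of the signed
increments of `f` along the diagonal step from `x` to `x + hμ`: the integrand of the local time
term. -/
noncomputable def diagIncrement (h : ℝ) (f : (Fin d → ℝ) → Fin d → ℝ) (x : Fin d → ℝ)
    (μ : Fin d → Bool) : ℝ :=
  ∑ j : Fin d, sgn (μ j) * (f (corner h x μ (j + 1)) j - f (corner h x μ j) j)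

theorem trapSum_diagPath (f : (Fin d → ℝ) → Fin d → ℝ) (x : Fin d → ℝ) (μ : Fin d → Bool) :
    trapSum d h f x (diagPath μ) =
      ∑ j : Fin d, f (corner h x μ j) j * (h * sgn (μ j)) +
        1 / 2 * (h * diagIncrement h f x μ) := by
  have hedges := trapSum_flatten_ofFn f _ (corner h x μ) (pathEnd_singleton_corner (h := h) x μ)
  rw [corner_zero] at hedges
  rw [diagPath, hedges, diagIncrement, Finset.mul_sum, Finset.mul_sum, ← Finset.sum_add_distrib]
  refine Finset.sum_congr rfl fun j _ => ?_
  rw [trapSum, trapSum, ← corner_succ]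
  ring

end DiagonalStep

section DiagonalWalk

/-- `S` is a walk with `S_{r+1} = S_r + h M_r`, where the signs of `M_r ∈ {-1,1}^d` are encoded by
booleans. -/
def IsDiagonalWalk (h : ℝ) (M : ℕ → Fin d → Bool) (S : ℕ → Fin d → ℝ) : Prop :=
  ∀ r i, S (r + 1) i = S r i + h * sgn (M r i)

/-- The path through `S_0, …, S_n` followed by a diagonal walk with directions `M`, each diagonal
step being resolved into coordinate edges. -/
def walkPath (M : ℕ → Fin d → Bool) (n : ℕ) : List (Fin d × Bool) :=
  (List.ofFn fun r : Fin n => diagPath (M r)).flatten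

variable {M : ℕ → Fin d → Bool} {S : ℕ → Fin d → ℝ}

theorem IsDiagonalWalk.pathEnd_diagPath (hS : IsDiagonalWalk h M S) (r : ℕ) :
    pathEnd d h (S r) (diagPath (M r)) = S (r + 1) :=
  (DiscretePaths.pathEnd_diagPath _ _).trans (funext fun i => (hS r i).symm)

theorem IsDiagonalWalk.pathEnd_walkPath (hS : IsDiagonalWalk h M S) (n : ℕ) :
    pathEnd d h (S 0) (walkPath M n) = S n :=
  pathEnd_flatten_ofFn _ S fun r => hS.pathEnd_diagPath r

theorem IsDiagonalWalk.trapSum_walkPath (hS : IsDiagonalWalk h M S)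
    (f : (Fin d → ℝ) → Fin d → ℝ) (n : ℕ) :
    trapSum d h f (S 0) (walkPath M n) =
      ∑ r ∈ Finset.range n, ∑ j : Fin d, f (corner h (S r) (M r) j) j * (h * sgn (M r j)) +
        1 / 2 * (h * ∑ r ∈ Finset.range n, diagIncrement h f (S r) (M r)) := by
  rw [walkPath, trapSum_flatten_ofFn f _ S fun r => hS.pathEnd_diagPath r, Finset.mul_sum,
    Finset.mul_sum, ← Finset.sum_add_distrib, Finset.sum_range]
  exact Finset.sum_congr rfl fun r _ => trapSum_diagPath f _ _

theorem InGrid.add_sgn {x : Fin d → ℝ} (hx : InGrid d a h x) (μ : Fin d → Bool) :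
    InGrid d a h fun i => x i + h * sgn (μ i) := by
  obtain ⟨k, hk⟩ := hx
  refine ⟨fun i => k i + if μ i then 1 else -1, fun i => ?_⟩
  simp only [hk, sgn]
  push_cast
  ring

theorem IsDiagonalWalk.inGrid (hS : IsDiagonalWalk h M S) (h0 : InGrid d a h (S 0)) (r : ℕ) :
    InGrid d a h (S r) := by
  induction r with
  | zero => exact h0
  | succ r ih => exact funext (hS r) ▸ ih.add_sgn (M r)

end DiagonalWalk

section Fibers

open scoped Finset

variable {α κ ι R : Type*} [DecidableEq κ]

theorem sum_card_filter_mul [DecidableEq ι] [Fintype ι] [NonAssocSemiring R] (s : Finset α)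
    (M : α → ι) (g : ι → R) :
    ∑ μ, (#{r ∈ s | M r = μ} : R) * g μ = ∑ r ∈ s, g (M r) := by
  simpa only [Finset.sum_const, nsmul_eq_mul] using Finset.sum_fiberwise' s M g

variable [AddCommMonoid R] (s : Finset α) (K : α → κ) (F : α → R)

theorem support_sum_filter_subset :
    Function.support (fun k => ∑ r ∈ s with K r = k, F r) ⊆ (s.image K : Set κ) := by
  intro k hk
  obtain ⟨r, hr, -⟩ := Finset.exists_ne_zero_of_sum_ne_zero hk
  obtain ⟨hrs, rfl⟩ := Finset.mem_filter.1 hr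
  exact Finset.mem_coe.2 (Finset.mem_image_of_mem K hrs)

theorem finsum_sum_filter : ∑ᶠ k, ∑ r ∈ s with K r = k, F r = ∑ r ∈ s, F r := by
  rw [finsum_eq_sum_of_support_subset _ (support_sum_filter_subset s K F)]
  exact Finset.sum_fiberwise_of_maps_to (fun r => Finset.mem_image_of_mem K) F

end Fibers

section LocalTime

open scoped Finset

/-- The grid point `a + hk` of `G(a,h)`. -/
def gridPoint (a : Fin d → ℝ) (h : ℝ) (k : Fin d → ℤ) : Fin d → ℝ :=
  fun i => a i + h * k i

theorem gridPoint_injective (hh : h ≠ 0) : Function.Injective (gridPoint a h) := by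
  intro k l hkl
  ext i
  exact_mod_cast mul_left_cancel₀ hh (add_left_cancel (congrFun hkl i))

/-- The partial local time `ℓ_h^μ(t_n, a + hk)` of the sequence `S`, with the grid point indexed by
`k ∈ ℤ^d` and the direction `μ ∈ {-1,1}^d` encoded by booleans. -/
noncomputable def localTime (a : Fin d → ℝ) (h : ℝ) (S : ℕ → Fin d → ℝ) (n : ℕ)
    (k : Fin d → ℤ) (μ : Fin d → Bool) : ℝ :=
  h * (Nat.card {j : ℕ // j < n ∧ (∀ i, S j i = a i + h * k i) ∧
    (∀ i, S (j + 1) i = a i + h * k i + h * sgn (μ i))} : ℝ)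

namespace IsDiagonalWalk

variable {M : ℕ → Fin d → Bool} {S : ℕ → Fin d → ℝ}

theorem step_eq_iff (hh : h ≠ 0) (hS : IsDiagonalWalk h M S) (r : ℕ) (μ : Fin d → Bool) :
    (∀ i, S (r + 1) i = S r i + h * sgn (μ i)) ↔ M r = μ := by
  simp only [hS r, add_right_inj, mul_right_inj' hh, sgn_injective.eq_iff, funext_iff]

theorem localTime_eq (hh : h ≠ 0) (hS : IsDiagonalWalk h M S) {K : ℕ → Fin d → ℤ}
    (hK : ∀ r, S r = gridPoint a h (K r)) (n : ℕ) (k : Fin d → ℤ) (μ : Fin d → Bool) :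
    localTime a h S n k μ =
      h * #{r ∈ {r ∈ Finset.range n | K r = k} | M r = μ} := by
  rw [localTime]
  congr 2
  refine Nat.subtype_card _ fun r => ?_
  have hpos : (∀ i, S r i = a i + h * k i) ↔ K r = k := by
    rw [← (gridPoint_injective hh).eq_iff, ← hK, funext_iff]
    rfl
  rw [Finset.mem_filter, Finset.mem_filter, Finset.mem_range, and_assoc, ← hpos,
    ← hS.step_eq_iff hh]
  exact and_congr_right fun _ => and_congr_right fun hr => by simp only [hr]

theorem sum_localTime_mul (hh : h ≠ 0) (hS : IsDiagonalWalk h M S) {K : ℕ → Fin d → ℤ}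
    (hK : ∀ r, S r = gridPoint a h (K r)) (g : (Fin d → ℝ) → (Fin d → Bool) → ℝ) (n : ℕ)
    (k : Fin d → ℤ) :
    ∑ μ, localTime a h S n k μ * g (gridPoint a h k) μ =
      ∑ r ∈ Finset.range n with K r = k, h * g (S r) (M r) := by
  simp only [hS.localTime_eq hh hK, mul_assoc]
  rw [← Finset.mul_sum, sum_card_filter_mul, Finset.mul_sum]
  refine Finset.sum_congr rfl fun r hr => ?_
  rw [hK, (Finset.mem_filter.1 hr).2]

theorem finite_support_sum_localTime_mul (hh : h ≠ 0) (hS : IsDiagonalWalk h M S)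
    (h0 : InGrid d a h (S 0)) (g : (Fin d → ℝ) → (Fin d → Bool) → ℝ) (n : ℕ) :
    (Function.support fun k =>
      ∑ μ, localTime a h S n k μ * g (gridPoint a h k) μ).Finite := by
  choose K hK using hS.inGrid h0
  simp only [hS.sum_localTime_mul hh fun r => funext (hK r)]
  exact (Finset.finite_toSet _).subset (support_sum_filter_subset _ _ _)

theorem finsum_sum_localTime_mul (hh : h ≠ 0) (hS : IsDiagonalWalk h M S)
    (h0 : InGrid d a h (S 0)) (g : (Fin d → ℝ) → (Fin d → Bool) → ℝ) (n : ℕ) :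
    ∑ᶠ k, ∑ μ, localTime a h S n k μ * g (gridPoint a h k) μ =
      h * ∑ r ∈ Finset.range n, g (S r) (M r) := by
  choose K hK using hS.inGrid h0
  simp only [hS.sum_localTime_mul hh fun r => funext (hK r)]
  rw [finsum_sum_filter, Finset.mul_sum]

end IsDiagonalWalk

end LocalTime

end DiscretePaths

/-- **Discrete Itô–Tanaka–Meyer formula** (Lemma 3.2).  Here
`ℓ_h^μ(t_n, x) = h · #{ j : 0 ≤ j < n, S_j = x, S_{j+1} = x + hμ }` is the partial local
time in direction `μ ∈ {−1,1}^d` (the direction `μ` is encoded by `μb : Fin d → Bool`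
via `μ i = sgn (μb i)`), and the sum over the grid points `x = a + h k`, `k ∈ ℤ^d`, has
finitely many nonzero terms, so it is expressed as a `finsum`.  Since `f` is discrete
conservative, the trapezoidal sum from `S_0 = a` to `S_n` is path independent, and the
identity is stated for an arbitrary discrete path `γ` from `a` to `S_n`. -/
theorem discrete_ito_tanaka_meyer
    (d : ℕ) (a : Fin d → ℝ) (h : ℝ) (hh : 0 < h)
    (f : (Fin d → ℝ) → Fin d → ℝ)
    (hf : DiscreteConservative d a h f)
    (X : ℕ → Fin d → ℝ)
    (hX : ∀ r : ℕ, ∀ j : Fin d, X r j = 1 ∨ X r j = -1)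
    (S : ℕ → Fin d → ℝ)
    (hS : ∀ n i, S n i = a i + h * ∑ r ∈ Finset.range n, X (r + 1) i)
    (ℓ : ℕ → (Fin d → ℤ) → (Fin d → Bool) → ℝ)
    (hℓ : ∀ n k μb, ℓ n k μb = h * (Nat.card {j : ℕ // j < n ∧
        (∀ i, S j i = a i + h * k i) ∧
        (∀ i, S (j + 1) i = a i + h * k i + h * sgn (μb i))} : ℝ))
    (n : ℕ) (hn : 1 ≤ n)
    (γ : List (Fin d × Bool)) (hγ : pathEnd d h a γ = S n) :
    (Function.support (fun k : Fin d → ℤ => ∑ μb : Fin d → Bool,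
        ℓ n k μb * ∑ j : Fin d, sgn (μb j) *
          (f (fun i => a i + h * k i + if (i : ℕ) ≤ (j : ℕ) then h * sgn (μb i) else 0) j
            - f (fun i => a i + h * k i + if (i : ℕ) < (j : ℕ) then h * sgn (μb i) else 0) j))).Finite
    ∧
    trapSum d h f a γ
      = (∑ r ∈ Finset.Icc 1 n, ∑ j : Fin d,
          f (fun i => S (r - 1) i + if (i : ℕ) < (j : ℕ) then h * X r i else 0) j
            * (h * X r j))
        + 1 / 2 * ∑ᶠ k : Fin d → ℤ, ∑ μb : Fin d → Bool,
            ℓ n k μb * ∑ j : Fin d, sgn (μb j) *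
              (f (fun i => a i + h * k i + if (i : ℕ) ≤ (j : ℕ) then h * sgn (μb i) else 0) j
                - f (fun i => a i + h * k i + if (i : ℕ) < (j : ℕ) then h * sgn (μb i) else 0) j) := by
  choose M hM using fun r j => exists_eq_sgn (hX (r + 1) j)
  have hwalk : IsDiagonalWalk h M S := fun r i => by
    rw [hS, hS, Finset.sum_range_succ, hM, mul_add, add_assoc]
  obtain rfl : S 0 = a := by
    ext i
    simp [hS]
  have hgrid : InGrid d (S 0) h (S 0) := ⟨0, by simp⟩
  obtain rfl : ℓ = localTime (S 0) h S := funext fun m => funext₂ (hℓ m)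
  -- `i ≤ j` becomes `i < j + 1`, the form in which the point is a `corner`
  simp only [← Nat.lt_add_one_iff]
  refine ⟨hwalk.finite_support_sum_localTime_mul hh.ne' hgrid (diagIncrement h f) n, ?_⟩
  rw [hf.trapSum_eq_of_pathEnd_eq hgrid (hγ.trans (hwalk.pathEnd_walkPath n).symm),
    hwalk.trapSum_walkPath,
    ← hwalk.finsum_sum_localTime_mul hh.ne' hgrid (diagIncrement h f) n,
    ← Finset.Ico_add_one_right_eq_Icc, Finset.sum_Ico_eq_sum_range]
  simp only [add_comm 1, hM, Nat.add_sub_cancel]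
  rfl
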